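/- Let r ≥ 1 and let λ̄ = (λ^{(1)},…,λ^{(r)}) be a sequence of partitions in P_n. Then a_ρ(x)·s_λ̄(x|y) = Σ_{T ∈ B_λ̄} c_T(y) · a_{ρ+ω(T)}(x), the sum over all barred skew tableaux of shape λ̄. -/

import Mathlib

open Finset MvPolynomial

attribute [local instance] Classical.propDecidable

/-- A partition in `P_n`: a weakly decreasing sequence of naturals. -/
def IsPartition {n : ℕ} (lam : Fin n → ℕ) : Prop := Antitone lam

/-- The cells of the Young diagram of `lam`, as pairs (row, column), 0-based. -/
noncomputable def cells {n : ℕ} (lam : Fin n → ℕ) : Finset (Fin n × ℕ) :=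
  (Finset.univ ×ˢ Finset.range (Finset.univ.sup lam)).filter fun c => c.2 < lam c.1

/-- Semistandardness for a filling with values in `Fin n` (0-based values):
rows weakly increase, columns strictly increase. -/
def IsSSYT {n : ℕ} (lam : Fin n → ℕ) (T : cells lam → Fin n) : Prop :=
  (∀ c d : cells lam, (c : Fin n × ℕ).1 = (d : Fin n × ℕ).1 →
      (c : Fin n × ℕ).2 ≤ (d : Fin n × ℕ).2 → T c ≤ T d) ∧
  (∀ c d : cells lam, (c : Fin n × ℕ).2 = (d : Fin n × ℕ).2 →
      (c : Fin n × ℕ).1 < (d : Fin n × ℕ).1 → T c < T d)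

/-- The y-subscript `a + c(a) - r(a)` of a cell (1-based value and coordinates). -/
def ysub {n : ℕ} (a : Fin n) (c : Fin n × ℕ) : ℤ := (a : ℤ) + 1 + (c.2 : ℤ) - ((c.1 : ℕ) : ℤ)

/-- The Schur polynomial `s_lam(x)`, in the ring with `x`-variables `Sum.inl i`
and `y`-variables `Sum.inr (i, k)` (family `i`, subscript `k`). -/
noncomputable def schur (n r : ℕ) (lam : Fin n → ℕ) :
    MvPolynomial (Fin n ⊕ Fin r × ℤ) ℤ :=
  ∑ T ∈ Finset.univ.filter (IsSSYT lam), ∏ c : cells lam, X (Sum.inl (T c))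

/-- The factorial Schur polynomial `s_lam(x | y^{(i)})`. -/
noncomputable def factSchur (n r : ℕ) (i : Fin r) (lam : Fin n → ℕ) :
    MvPolynomial (Fin n ⊕ Fin r × ℤ) ℤ :=
  ∑ T ∈ Finset.univ.filter (IsSSYT lam),
    ∏ c : cells lam,
      (X (Sum.inl (T c)) + X (Sum.inr (i, ysub (T c) (c : Fin n × ℕ))))

/-- A barred filling of a single Young diagram: an entry is a value in `Fin n`
(0-based) together with a `Bool` recording whether it is barred.  Rows weakly
increase and columns strictly increase in value, disregarding bars. -/
def IsBarred {n : ℕ} (lam : Fin n → ℕ) (T : cells lam → Fin n × Bool) : Prop :=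
  (∀ c d : cells lam, (c : Fin n × ℕ).1 = (d : Fin n × ℕ).1 →
      (c : Fin n × ℕ).2 ≤ (d : Fin n × ℕ).2 → (T c).1 ≤ (T d).1) ∧
  (∀ c d : cells lam, (c : Fin n × ℕ).2 = (d : Fin n × ℕ).2 →
      (c : Fin n × ℕ).1 < (d : Fin n × ℕ).1 → (T c).1 < (T d).1)

/-- A barred skew tableau of shape `λ̄ = (lam 0, …, lam (r-1))`: since consecutive
diagrams are placed strictly below and to the left of the preceding one, no two
diagrams share a row or a column, so such a tableau is exactly a tuple of barred
fillings of the individual diagrams. -/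
def IsBarredSkew {n r : ℕ} (lam : Fin r → Fin n → ℕ)
    (T : (i : Fin r) → cells (lam i) → Fin n × Bool) : Prop :=
  ∀ i, IsBarred (lam i) (T i)

/-- Unbarred content of a barred filling of one diagram. -/
noncomputable def content1 {n : ℕ} (lam : Fin n → ℕ) (T : cells lam → Fin n × Bool)
    (k : Fin n) : ℕ :=
  (Finset.univ.filter fun c : cells lam => T c = (k, false)).card

/-- Unbarred content `ω(T)` of a barred skew tableau. -/
noncomputable def contentT {n r : ℕ} (lam : Fin r → Fin n → ℕ)
    (T : (i : Fin r) → cells (lam i) → Fin n × Bool) (k : Fin n) : ℕ :=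
  ∑ i, content1 (lam i) (T i) k

/-- The monomial `c_T(y)` contributed by the barred entries of one diagram
(living in the ring of `y`-variables only). -/
noncomputable def cT1 {n : ℕ} (r : ℕ) (i : Fin r) (lam : Fin n → ℕ)
    (T : cells lam → Fin n × Bool) : MvPolynomial (Fin r × ℤ) ℤ :=
  ∏ c ∈ Finset.univ.filter (fun c : cells lam => (T c).2 = true),
    X (i, ysub (T c).1 (c : Fin n × ℕ))

/-- The monomial `c_T(y)` of a barred skew tableau. -/
noncomputable def cT {n r : ℕ} (lam : Fin r → Fin n → ℕ)
    (T : (i : Fin r) → cells (lam i) → Fin n × Bool) : MvPolynomial (Fin r × ℤ) ℤ :=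
  ∏ i, cT1 r i (lam i) (T i)

/-- The unbarred column word of a barred filling of one diagram: unbarred values
(0-based) read down each column, from the rightmost column to the leftmost. -/
noncomputable def colWord1 {n : ℕ} (lam : Fin n → ℕ)
    (T : cells lam → Fin n × Bool) : List ℕ :=
  ((List.range (Finset.univ.sup lam)).reverse).flatMap fun j =>
    (List.finRange n).filterMap fun i =>
      if h : (i, j) ∈ cells lam then
        (if (T ⟨(i, j), h⟩).2 = false then some ((T ⟨(i, j), h⟩).1 : ℕ) else none)
      else none

/-- The unbarred column word of a barred skew tableau: diagram `lam 0` is the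
rightmost, so its word comes first. -/
noncomputable def colWord {n r : ℕ} (lam : Fin r → Fin n → ℕ)
    (T : (i : Fin r) → cells (lam i) → Fin n × Bool) : List ℕ :=
  (List.finRange r).flatMap fun i => colWord1 (lam i) (T i)

/-- A word (with 0-based values) is Yamanouchi if every initial segment contains
at least as many `k`'s as `(k+1)`'s, for every `k`. -/
def IsYam (w : List ℕ) : Prop :=
  ∀ t k, ((w.take t).count (k + 1)) ≤ (w.take t).count k

/-- The alternant `a_ξ(x) = det[(x_i)^{ξ_j}]`. -/
noncomputable def avand (n r : ℕ) (xi : Fin n → ℕ) :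
    MvPolynomial (Fin n ⊕ Fin r × ℤ) ℤ :=
  Matrix.det (Matrix.of fun i j : Fin n =>
    (X (Sum.inl i) : MvPolynomial (Fin n ⊕ Fin r × ℤ) ℤ) ^ xi j)

/-- `ρ = (n-1, n-2, …, 0)`. -/
def rhoPart (n : ℕ) : Fin n → ℕ := fun i => n - 1 - (i : ℕ)

section helpers

set_option linter.unusedSectionVars false

variable {R : Type*} [CommRing R] [IsDomain R]

lemma twoVar_tel (Y : ℕ → R) (x z : R) (l : ℕ) (d : ℕ) :
    (x - z) * ∑ v ∈ Finset.Icc l (l + d), ((∏ j ∈ Finset.Ico l v, (x + Y j)) *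
      ∏ j ∈ Finset.Ico v (l + d), (z + Y (j + 1))) =
    (∏ j ∈ Finset.Ico l (l + d + 1), (x + Y j)) - ∏ j ∈ Finset.Ico l (l + d + 1), (z + Y j) := by
  induction d with
  | zero => simp
  | succ d ih =>
    have e : Finset.Icc l (l + (d + 1)) = insert (l + (d + 1)) (Finset.Icc l (l + d)) := by
      ext a; simp only [Finset.mem_Icc, Finset.mem_insert]; omega
    rw [e, Finset.sum_insert (by simp)]
    have h1 : ∑ v ∈ Finset.Icc l (l + d), ((∏ j ∈ Finset.Ico l v, (x + Y j)) *
      ∏ j ∈ Finset.Ico v (l + (d + 1)), (z + Y (j + 1))) =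
      (∑ v ∈ Finset.Icc l (l + d), ((∏ j ∈ Finset.Ico l v, (x + Y j)) *
      ∏ j ∈ Finset.Ico v (l + d), (z + Y (j + 1)))) * (z + Y (l + d + 1)) := by
      rw [Finset.sum_mul]
      refine Finset.sum_congr rfl fun v hv => ?_
      rw [← add_assoc, Finset.prod_Ico_succ_top (Finset.mem_Icc.1 hv).2, mul_assoc]
    rw [h1, mul_add, ← mul_assoc (x - z) (∑ v ∈ _, _), ih, ← add_assoc,
      Finset.prod_Ico_succ_top (b := l + d + 1) (by omega),
      Finset.prod_Ico_succ_top (b := l + d + 1) (by omega)]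
    simp
    ring

lemma twoVar_symm (Y : ℕ → R) (x z : R) (l r : ℕ) :
    ∑ v ∈ Finset.Icc l r, ((∏ j ∈ Finset.Ico l v, (x + Y j)) *
      ∏ j ∈ Finset.Ico v r, (z + Y (j + 1))) =
    ∑ v ∈ Finset.Icc l r, ((∏ j ∈ Finset.Ico l v, (z + Y j)) *
      ∏ j ∈ Finset.Ico v r, (x + Y (j + 1))) := by
  by_cases hxz : x = z
  · subst hxz; rfl
  by_cases hlr : l ≤ r
  · obtain ⟨d, rfl⟩ := Nat.exists_eq_add_of_le hlr
    have h1 := twoVar_tel Y x z l d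
    have h2 := twoVar_tel Y z x l d
    apply mul_left_cancel₀ (sub_ne_zero.2 hxz)
    rw [h1, ← neg_sub z x, neg_mul, h2]; ring
  · rw [Finset.Icc_eq_empty hlr]; simp

lemma row_split (Y : ℕ → R) (x z : R) (L l r Q : ℕ) (h1 : L ≤ l) (h2 : r ≤ Q) :
    ∑ v ∈ Finset.Icc l r, ∏ j ∈ Finset.Ico L Q, (if j < v then x + Y j else z + Y (j + 1)) =
    (∏ j ∈ Finset.Ico L l, (x + Y j)) * (∑ v ∈ Finset.Icc l r,
      ((∏ j ∈ Finset.Ico l v, (x + Y j)) * ∏ j ∈ Finset.Ico v r, (z + Y (j + 1)))) *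
      ∏ j ∈ Finset.Ico r Q, (z + Y (j + 1)) := by
  rw [Finset.mul_sum, Finset.sum_mul]
  refine Finset.sum_congr rfl fun v hv => ?_
  rw [Finset.mem_Icc] at hv
  rw [← Finset.prod_Ico_consecutive _ (h1.trans hv.1) (hv.2.trans h2), ← mul_assoc,
    Finset.prod_Ico_consecutive _ h1 hv.1, mul_assoc,
    Finset.prod_Ico_consecutive _ hv.2 h2]
  congr 1
  · refine Finset.prod_congr rfl fun j hj => ?_
    rw [if_pos (Finset.mem_Ico.1 hj).2]
  · refine Finset.prod_congr rfl fun j hj => ?_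
    rw [if_neg (not_lt.2 (Finset.mem_Ico.1 hj).1)]

/-- lower bound for the cut in row `i` -/
def lowB (L Q : ℕ → ℕ) (i : ℕ) : ℕ := max (L i) (Q (i + 1))
/-- upper bound for the cut in row `i` -/
def uppB (L Q : ℕ → ℕ) (i : ℕ) : ℕ := if i = 0 then Q 0 else min (Q i) (L (i - 1))

lemma rows_symm (y : ℤ → R) (k : ℤ) (L Q : ℕ → ℕ) (n : ℕ) (hQ : Q n = 0) (x z : R) :
    ∏ i ∈ Finset.range n, ∑ v ∈ Finset.Icc (lowB L Q i) (uppB L Q i),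
      ∏ j ∈ Finset.Ico (L i) (Q i),
        (if j < v then x + y (k + 1 + (j : ℤ) - i) else z + y (k + 1 + ((j + 1 : ℕ) : ℤ) - i)) =
    ∏ i ∈ Finset.range n, ∑ v ∈ Finset.Icc (lowB L Q i) (uppB L Q i),
      ∏ j ∈ Finset.Ico (L i) (Q i),
        (if j < v then z + y (k + 1 + (j : ℤ) - i) else x + y (k + 1 + ((j + 1 : ℕ) : ℤ) - i)) := by
  have key : ∀ x z : R, ∏ i ∈ Finset.range n, ∑ v ∈ Finset.Icc (lowB L Q i) (uppB L Q i),
      ∏ j ∈ Finset.Ico (L i) (Q i),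
        (if j < v then x + y (k + 1 + (j : ℤ) - i) else z + y (k + 1 + ((j + 1 : ℕ) : ℤ) - i)) =
      (∏ i ∈ Finset.range (n - 1), ∏ j ∈ Finset.Ico (L i) (lowB L Q i), (x + y (k + 1 + (j : ℤ) - i))) *
      (∏ i ∈ Finset.range n, ∑ v ∈ Finset.Icc (lowB L Q i) (uppB L Q i),
        ((∏ j ∈ Finset.Ico (lowB L Q i) v, (x + y (k + 1 + (j : ℤ) - i))) *
        ∏ j ∈ Finset.Ico v (uppB L Q i), (z + y (k + 1 + ((j + 1 : ℕ) : ℤ) - i)))) *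
      (∏ i ∈ Finset.range (n - 1), ∏ j ∈ Finset.Ico (L i) (lowB L Q i), (z + y (k + 1 + (j : ℤ) - i))) := by
    intro x z
    have hl : ∀ i, L i ≤ lowB L Q i := fun i => le_max_left _ _
    have hr : ∀ i, uppB L Q i ≤ Q i := by
      intro i; unfold uppB; split_ifs with h
      · rw [h]
      · exact min_le_left _ _
    rw [Finset.prod_congr rfl fun (i : ℕ) _ =>
      row_split (fun j => y (k + 1 + (j : ℤ) - i)) x z (L i) _ _ (Q i) (hl i) (hr i)]
    rw [Finset.prod_mul_distrib, Finset.prod_mul_distrib]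
    rcases n with _ | m
    · simp
    congr 1
    · congr 1
      rw [Finset.prod_range_succ]
      simp [lowB, hQ]
    · rw [Finset.prod_range_succ']
      simp only [uppB, Finset.Ico_self, Finset.prod_empty, mul_one, if_true, Nat.add_sub_cancel]
      refine Finset.prod_congr rfl fun i _ => ?_
      have : Finset.Ico (L i) (lowB L Q i) = Finset.Ico (min (Q (i + 1)) (L i)) (Q (i + 1)) := by
        ext a; simp only [lowB, Finset.mem_Ico]; omega
      rw [this]
      simp only [Nat.add_eq_zero_iff, one_ne_zero, and_false, if_false]
      refine Finset.prod_congr rfl fun j _ => ?_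
      congr 2; push_cast; ring
  rw [key, key]
  rw [Finset.prod_congr rfl fun (i : ℕ) _ =>
    twoVar_symm (fun j => y (k + 1 + (j : ℤ) - i)) x z (lowB L Q i) (uppB L Q i)]
  ring

end helpers
section symm

variable {n : ℕ} {lam : Fin n → ℕ}

lemma mem_cells' (c : Fin n × ℕ) : c ∈ cells lam ↔ c.2 < lam c.1 := by
  unfold cells
  simp only [Finset.mem_filter, Finset.mem_product, Finset.mem_univ, true_and, Finset.mem_range,
    and_iff_right_iff_imp]
  intro h
  exact lt_of_lt_of_le h (Finset.le_sup (Finset.mem_univ c.1))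

/-- number of entries `< a` in row `i` -/
noncomputable def cnt (T : cells lam → Fin n) (a i : ℕ) : ℕ :=
  ((Finset.range (Finset.univ.sup lam)).filter fun j =>
    ∃ (hi : i < n) (h : ((⟨i, hi⟩ : Fin n), j) ∈ cells lam), (T ⟨_, h⟩ : ℕ) < a).card

lemma cnt_eq_of (T : cells lam → Fin n) (a : ℕ) (i : Fin n) (v : ℕ) (hv : v ≤ lam i)
    (h : ∀ c : cells lam, c.1.1 = i → ((T c : ℕ) < a ↔ c.1.2 < v)) : cnt T a i = v := by
  unfold cnt
  rw [show (Finset.range (Finset.univ.sup lam)).filter (fun j =>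
    ∃ (hi : (i : ℕ) < n) (h : ((⟨i, hi⟩ : Fin n), j) ∈ cells lam), (T ⟨_, h⟩ : ℕ) < a)
    = Finset.range v from ?_, Finset.card_range]
  ext j
  simp only [Finset.mem_filter, Finset.mem_range]
  constructor
  · rintro ⟨_, hi, hc, ht⟩
    exact (h ⟨_, hc⟩ rfl).1 ht
  · intro hj
    have hl : lam i ≤ Finset.univ.sup lam := Finset.le_sup (Finset.mem_univ i)
    have hc : (i, j) ∈ cells lam := (mem_cells' _).2 (by simp; omega)
    exact ⟨by omega, i.2, hc, (h ⟨_, hc⟩ rfl).2 hj⟩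

lemma exists_cut (T : cells lam → Fin n) (hT : IsSSYT lam T) (a : ℕ) (i : Fin n) :
    ∃ v ≤ lam i, ∀ c : cells lam, c.1.1 = i → ((T c : ℕ) < a ↔ c.1.2 < v) := by
  classical
  by_cases hex : ∃ v, v < lam i ∧ ∃ c : cells lam, c.1 = (i, v) ∧ ¬ ((T c : ℕ) < a)
  · refine ⟨Nat.find hex, (Nat.find_spec hex).1.le, ?_⟩
    obtain ⟨h1, c0, hc0, h2⟩ := Nat.find_spec hex
    rintro ⟨⟨i', j⟩, hc⟩ rfl
    have hj := (mem_cells' _).1 hc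
    constructor
    · intro h
      by_contra hlt
      have := hT.1 c0 ⟨(i', j), hc⟩ (by rw [hc0]) (by rw [hc0]; simpa using hlt)
      have h3 : (T c0 : ℕ) ≤ T ⟨(i', j), hc⟩ := this
      omega
    · intro h
      by_contra hlt
      exact Nat.find_min hex h ⟨hj, ⟨_, hc⟩, rfl, hlt⟩
  · push Not at hex
    refine ⟨lam i, le_rfl, ?_⟩
    rintro ⟨⟨i', j⟩, hc⟩ rfl
    have hj := (mem_cells' _).1 hc
    exact ⟨fun _ => hj, fun _ => hex j hj _ rfl⟩

lemma cnt_spec (T : cells lam → Fin n) (hT : IsSSYT lam T) (a : ℕ) (c : cells lam) :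
    (T c : ℕ) < a ↔ c.1.2 < cnt T a c.1.1 := by
  obtain ⟨v, hv, h⟩ := exists_cut T hT a c.1.1
  rw [cnt_eq_of T a _ v hv h]
  exact h c rfl

lemma cnt_le (T : cells lam → Fin n) (hT : IsSSYT lam T) (a : ℕ) (i : Fin n) :
    cnt T a i ≤ lam i := by
  obtain ⟨v, hv, h⟩ := exists_cut T hT a i
  rwa [cnt_eq_of T a _ v hv h]

lemma cnt_zero (T : cells lam → Fin n) (a i : ℕ) (hi : n ≤ i) : cnt T a i = 0 := by
  unfold cnt
  rw [Finset.card_eq_zero, Finset.filter_eq_empty_iff]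
  rintro j _ ⟨h, _⟩
  omega

lemma cnt_mono (T : cells lam → Fin n) (a b i : ℕ) (h : a ≤ b) : cnt T a i ≤ cnt T b i := by
  unfold cnt
  apply Finset.card_le_card
  intro j
  simp only [Finset.mem_filter]
  rintro ⟨h1, h2, h3, h4⟩
  exact ⟨h1, h2, h3, by omega⟩

lemma cnt_col (hlam : IsPartition lam) (T : cells lam → Fin n) (hT : IsSSYT lam T) (a i j : ℕ)
    (h : i < j) : cnt T (a + 1) j ≤ cnt T a i := by
  unfold cnt
  apply Finset.card_le_card
  intro m
  simp only [Finset.mem_filter]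
  rintro ⟨h1, h2, h3, h4⟩
  have hi : i < n := by omega
  have hc : ((⟨i, hi⟩ : Fin n), m) ∈ cells lam := by
    rw [mem_cells'] at h3 ⊢
    exact lt_of_lt_of_le h3 (hlam (by simpa using h.le))
  refine ⟨h1, hi, hc, ?_⟩
  have := hT.2 ⟨_, hc⟩ ⟨_, h3⟩ rfl (by simpa using h)
  have h5 : (T ⟨_, hc⟩ : ℕ) < T ⟨_, h3⟩ := this
  omega

lemma cnt_congr (T S : cells lam → Fin n) (a i : ℕ) (h : ∀ c, (T c : ℕ) < a ↔ (S c : ℕ) < a) :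
    cnt T a i = cnt S a i := by
  unfold cnt
  simp only [h]

/-- merge `q` into `p` -/
noncomputable def merge (p q : Fin n) (T : cells lam → Fin n) : cells lam → Fin n :=
  fun c => if T c = q then p else T c

/-- split `p` into `p`, `q` along `v` -/
noncomputable def unmerge (p q : Fin n) (S : cells lam → Fin n) (v : Fin n → ℕ) :
    cells lam → Fin n :=
  fun c => if S c = p then (if c.1.2 < v c.1.1 then p else q) else S c

/-- generic factorial Schur -/
noncomputable def FS {R : Type*} [CommRing R] (lam : Fin n → ℕ) (x : Fin n → R) (y : ℤ → R) : R :=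
  ∑ T ∈ Finset.univ.filter (IsSSYT lam),
    ∏ c : cells lam, (x (T c) + y (ysub (T c) (c : Fin n × ℕ)))

lemma prod_cells {M : Type*} [CommMonoid M] (f : Fin n → ℕ → M)
    (L Q : Fin n → ℕ) (hQ : ∀ i, Q i ≤ lam i) :
    ∏ c ∈ (Finset.univ : Finset (cells lam)).filter
      (fun c => L c.1.1 ≤ c.1.2 ∧ c.1.2 < Q c.1.1), f c.1.1 c.1.2 =
    ∏ i, ∏ j ∈ Finset.Ico (L i) (Q i), f i j := by
  rw [Finset.prod_sigma']
  refine Finset.prod_bij (fun c _ => ⟨c.1.1, c.1.2⟩) ?_ ?_ ?_ ?_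
  · intro c hc
    simpa using hc
  · rintro ⟨⟨a, b⟩, h⟩ _ ⟨⟨a', b'⟩, h'⟩ _ he
    simp at he
    simp [he]
  · rintro ⟨i, j⟩ h
    simp at h
    exact ⟨⟨(i, j), (mem_cells' _).2 (lt_of_lt_of_le h.2 (hQ i))⟩, by simpa using h, rfl⟩
  · intros; rfl

end symm
section symm2

variable {n : ℕ} {lam : Fin n → ℕ}

lemma merge_lt (p q : Fin n) (hpq : (q : ℕ) = p + 1) (T : cells lam → Fin n) (c : cells lam) :
    ((merge p q T c : ℕ) < p ↔ (T c : ℕ) < p) ∧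
    ((merge p q T c : ℕ) < p + 2 ↔ (T c : ℕ) < p + 2) ∧
    (merge p q T c = p ↔ (p : ℕ) ≤ T c ∧ (T c : ℕ) < p + 2) := by
  unfold merge
  simp only [Fin.ext_iff]
  split_ifs with h <;> simp <;> omega

lemma unmerge_ssyt (hlam : IsPartition lam) (p q : Fin n) (hpq : (q : ℕ) = p + 1)
    (T0 : cells lam → Fin n) (hT0 : IsSSYT lam T0) (v : Fin n → ℕ)
    (hv : ∀ i : Fin n, lowB (cnt T0 p) (cnt T0 (p + 2)) i ≤ v i ∧
      v i ≤ uppB (cnt T0 p) (cnt T0 (p + 2)) i) :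
    IsSSYT lam (unmerge p q (merge p q T0) v) := by
  have hm := merge_lt (lam := lam) p q hpq T0
  have hval : ∀ c, (unmerge p q (merge p q T0) v c : ℕ) =
      if (p : ℕ) ≤ T0 c ∧ (T0 c : ℕ) < p + 2 then (if c.1.2 < v c.1.1 then (p : ℕ) else p + 1)
      else T0 c := by
    intro c
    unfold unmerge
    simp only [(hm c).2.2]
    split_ifs with h1 h2
    · rfl
    · exact hpq
    · unfold merge
      rw [if_neg]
      rw [Fin.ext_iff]; omega
  constructor
  · intro c d h1 h2
    rw [Fin.le_def, hval, hval]
    have := hT0.1 c d h1 h2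
    rw [Fin.le_def] at this
    rw [h1]
    split_ifs <;> omega
  · intro c d h1 h2
    rw [Fin.lt_def, hval, hval]
    have h3 := hT0.2 c d h1 h2
    rw [Fin.lt_def] at h3
    by_cases hc : (p : ℕ) ≤ T0 c ∧ (T0 c : ℕ) < p + 2
    · by_cases hd : (p : ℕ) ≤ T0 d ∧ (T0 d : ℕ) < p + 2
      · rw [if_pos hc, if_pos hd, if_pos, if_neg]
        · omega
        · have e1 := (hv d.1.1).2
          have e2 := (cnt_spec T0 hT0 p c).not.1 (by omega)
          have e3 : c.1.1.val < d.1.1.val := h2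
          unfold uppB at e1
          rw [if_neg (by omega)] at e1
          have e4 : cnt T0 p (d.1.1 - 1 : ℕ) ≤ cnt T0 p c.1.1 := by
            rcases Nat.lt_or_ge c.1.1.val (d.1.1 - 1 : ℕ) with h | h
            · exact (cnt_mono T0 _ _ _ (Nat.le_succ _)).trans (cnt_col hlam T0 hT0 p _ _ h)
            · rw [show (d.1.1 - 1 : ℕ) = c.1.1.val by omega]
          have e5 := min_le_right (cnt T0 (p + 2) d.1.1) (cnt T0 p (d.1.1 - 1 : ℕ))
          omega
        · have e1 := (hv c.1.1).1
          have e2 := (cnt_spec T0 hT0 (p + 2) d).1 (by omega)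
          have e3 : c.1.1.val < d.1.1.val := h2
          unfold lowB at e1
          have e4 : cnt T0 (p + 2) d.1.1 ≤ cnt T0 (p + 2) (c.1.1 + 1 : ℕ) := by
            rcases Nat.lt_or_ge (c.1.1 + 1 : ℕ) d.1.1 with h | h
            · exact (cnt_mono T0 _ _ _ (Nat.le_succ _)).trans (cnt_col hlam T0 hT0 _ _ _ h)
            · rw [show (c.1.1 + 1 : ℕ) = d.1.1.val by omega]
          have e5 := le_max_right (cnt T0 p c.1.1) (cnt T0 (p + 2) (c.1.1 + 1 : ℕ))
          omega
      · split_ifs <;> omega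
    · split_ifs <;> omega

lemma fiber_sum {R : Type*} [CommRing R] (hlam : IsPartition lam) (p q : Fin n)
    (hpq : (q : ℕ) = p + 1)
    (T0 : cells lam → Fin n) (hT0 : IsSSYT lam T0) (x : Fin n → R) (y : ℤ → R) :
    ∑ T ∈ (Finset.univ.filter (IsSSYT lam)).filter (fun T => merge p q T = merge p q T0),
      ∏ c : cells lam, (x (T c) + y (ysub (T c) (c : Fin n × ℕ))) =
    (∏ c ∈ Finset.univ.filter (fun c : cells lam => ¬ merge p q T0 c = p),
      (x (T0 c) + y (ysub (T0 c) (c : Fin n × ℕ)))) *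
    ∏ i ∈ Finset.range n, ∑ v ∈ Finset.Icc (lowB (cnt T0 p) (cnt T0 (p + 2)) i)
        (uppB (cnt T0 p) (cnt T0 (p + 2)) i),
      ∏ j ∈ Finset.Ico (cnt T0 p i) (cnt T0 (p + 2) i),
        (if j < v then x p + y ((p : ℤ) + 1 + (j : ℤ) - i)
          else x q + y ((p : ℤ) + 1 + ((j + 1 : ℕ) : ℤ) - i)) := by
  have hm := merge_lt (lam := lam) p q hpq
  rw [Finset.prod_range, Finset.prod_univ_sum, Finset.mul_sum]
  have hup : ∀ i, uppB (cnt T0 p) (cnt T0 (p + 2)) i ≤ cnt T0 (p + 2) i := by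
    intro i; unfold uppB; split_ifs with h
    · rw [h]
    · exact min_le_left _ _
  have hSp : ∀ c, merge p q T0 c = p ↔
      cnt T0 p c.1.1 ≤ c.1.2 ∧ c.1.2 < cnt T0 (p + 2) c.1.1 := by
    intro c
    rw [(hm T0 c).2.2, cnt_spec T0 hT0, ← not_lt, cnt_spec T0 hT0, not_lt]
  have hback : ∀ T, IsSSYT lam T → merge p q T = merge p q T0 →
      unmerge p q (merge p q T0) (fun i => cnt T (p + 1) i) = T := by
    intro T hT he
    funext c
    unfold unmerge
    rw [← he]
    simp only [← cnt_spec T hT, (hm T c).2.2]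
    split_ifs with h1 h2
    · rw [Fin.ext_iff]; omega
    · rw [Fin.ext_iff]; omega
    · unfold merge
      rw [if_neg]
      rw [Fin.ext_iff]; omega
  refine Finset.sum_bij' (fun T _ i => cnt T (p + 1) i)
    (fun v _ => unmerge p q (merge p q T0) v) ?_ ?_ ?_ ?_ ?_
  · intro T hT
    simp only [Finset.mem_filter, Finset.mem_univ, true_and] at hT
    obtain ⟨hT, he⟩ := hT
    have hL : cnt T0 p = cnt T p := by
      funext i
      apply cnt_congr; intro c
      rw [← (hm T0 c).1, ← (hm T c).1, he]
    have hQ : cnt T0 (p + 2) = cnt T (p + 2) := by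
      funext i
      apply cnt_congr; intro c
      rw [← (hm T0 c).2.1, ← (hm T c).2.1, he]
    rw [Fintype.mem_piFinset]
    intro i
    rw [Finset.mem_Icc, hL, hQ]
    constructor
    · exact max_le (cnt_mono _ _ _ _ (by omega)) (cnt_col hlam T hT _ _ _ (by omega))
    · unfold uppB
      split_ifs with h
      · rw [h]; exact cnt_mono _ _ _ _ (by omega)
      · exact le_min (cnt_mono _ _ _ _ (by omega)) (cnt_col hlam T hT _ _ _ (by omega))
  · intro v hv
    rw [Fintype.mem_piFinset] at hv
    simp only [Finset.mem_filter, Finset.mem_univ, true_and]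
    refine ⟨unmerge_ssyt hlam p q hpq T0 hT0 v fun i => Finset.mem_Icc.1 (hv i), ?_⟩
    funext c
    have : p ≠ q := by rw [ne_eq, Fin.ext_iff]; omega
    have h2 : merge p q T0 c ≠ q := by
      unfold merge; split_ifs with h <;> assumption
    change (if unmerge p q (merge p q T0) v c = q then p
      else unmerge p q (merge p q T0) v c) = merge p q T0 c
    generalize merge p q T0 = S at h2 ⊢
    unfold unmerge
    by_cases h3 : S c = p
    · rw [if_pos h3, h3]
      split_ifs <;> simp_all
    · rw [if_neg h3, if_neg h2]
  · intro T hT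
    simp only [Finset.mem_filter, Finset.mem_univ, true_and] at hT
    exact hback T hT.1 hT.2
  · intro v hv
    rw [Fintype.mem_piFinset] at hv
    funext i
    have hvi := Finset.mem_Icc.1 (hv i)
    have h1 := (hvi.2.trans (hup i))
    have h0 : cnt T0 p i ≤ v i := (le_max_left _ _).trans hvi.1
    apply cnt_eq_of _ _ _ _ (h1.trans (cnt_le T0 hT0 _ i))
    rintro c rfl
    have hs := hSp c
    have e1 := cnt_spec T0 hT0 p c
    have e2 := cnt_spec T0 hT0 (p + 2) c
    unfold unmerge
    split_ifs with g1 g2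
    · simp [g2]
    · simp only [g2, iff_false]; omega
    · rw [hs] at g1
      have : merge p q T0 c = T0 c := by
        unfold merge; rw [if_neg]; rw [Fin.ext_iff]; omega
      rw [this]
      omega
  · intro T hT
    simp only [Finset.mem_filter, Finset.mem_univ, true_and] at hT
    obtain ⟨hT, he⟩ := hT
    rw [← Finset.prod_filter_not_mul_prod_filter (s := Finset.univ)
      (fun c => merge p q T0 c = p)]
    congr 1
    · refine Finset.prod_congr rfl fun c hc => ?_
      simp only [Finset.mem_filter, Finset.mem_univ, true_and] at hc
      have hc' := hc
      rw [← he] at hc'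
      have : T c = T0 c := by
        have := congrFun he c
        unfold merge at this hc hc'
        split_ifs at this hc hc' <;> simp_all
      rw [this]
    · rw [← prod_cells (lam := lam) (fun (i : Fin n) (j : ℕ) => if j < cnt T (p + 1) i
          then x p + y ((p : ℤ) + 1 + (j : ℤ) - ((i : ℕ) : ℤ))
          else x q + y ((p : ℤ) + 1 + ((j + 1 : ℕ) : ℤ) - ((i : ℕ) : ℤ)))
          (fun i => cnt T0 p i) (fun i => cnt T0 (p + 2) i) (fun i => cnt_le T0 hT0 _ i)]
      rw [Finset.filter_congr fun c _ => hSp c]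
      refine Finset.prod_congr rfl fun c hc => ?_
      simp only [Finset.mem_filter, Finset.mem_univ, true_and] at hc
      rw [← hSp, ← he, (hm T c).2.2] at hc
      have hcs := cnt_spec T hT (p + 1) c
      split_ifs with h
      · have : T c = p := by rw [Fin.ext_iff]; omega
        rw [this]; rfl
      · have : T c = q := by rw [Fin.ext_iff]; omega
        rw [this]; unfold ysub
        congr 2; rw [hpq]; push_cast; ring

lemma FS_swap {R : Type*} [CommRing R] [IsDomain R] (hlam : IsPartition lam) (p q : Fin n)
    (hpq : (q : ℕ) = p + 1) (x : Fin n → R) (y : ℤ → R) :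
    FS lam (x ∘ Equiv.swap p q) y = FS lam x y := by
  unfold FS
  rw [← Finset.sum_fiberwise (Finset.univ.filter (IsSSYT lam)) (merge p q),
    ← Finset.sum_fiberwise (Finset.univ.filter (IsSSYT lam)) (merge p q)]
  refine Finset.sum_congr rfl fun S _ => ?_
  by_cases hne : ∃ T0, IsSSYT lam T0 ∧ merge p q T0 = S
  · obtain ⟨T0, hT0, rfl⟩ := hne
    rw [fiber_sum hlam p q hpq T0 hT0, fiber_sum hlam p q hpq T0 hT0]
    congr 1
    · refine Finset.prod_congr rfl fun c hc => ?_
      simp only [Finset.mem_filter, Finset.mem_univ, true_and] at hc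
      have h1 : T0 c ≠ q := by
        intro h; apply hc; simp [merge, h]
      have h2 : T0 c ≠ p := by
        intro h; apply hc; unfold merge; rw [if_neg h1, h]
      rw [Function.comp, Equiv.swap_apply_of_ne_of_ne h2 h1]
    · simp only [Function.comp, Equiv.swap_apply_left, Equiv.swap_apply_right]
      exact rows_symm y p _ _ n (cnt_zero _ _ _ le_rfl) (x q) (x p)
  · rw [Finset.filter_eq_empty_iff.2, Finset.sum_empty, Finset.sum_empty]
    intro T hT h
    exact hne ⟨T, (Finset.mem_filter.1 hT).2, h⟩

lemma FS_perm {R : Type*} [CommRing R] [IsDomain R] (hlam : IsPartition lam)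
    (σ : Equiv.Perm (Fin n)) (x : Fin n → R) (y : ℤ → R) :
    FS lam (x ∘ σ) y = FS lam x y := by
  rcases n with _ | n
  · congr 1; funext i; exact i.elim0
  have hσ : σ ∈ Submonoid.closure
      (Set.range fun i : Fin n => Equiv.swap i.castSucc i.succ) := by
    rw [Equiv.Perm.mclosure_swap_castSucc_succ]; trivial
  induction hσ using Submonoid.closure_induction generalizing x with
  | mem s hs =>
    obtain ⟨i, rfl⟩ := hs
    exact FS_swap hlam _ _ (by simp) x y
  | one => rfl
  | mul s t _ _ h1 h2 =>
    rw [Equiv.Perm.coe_mul, ← Function.comp_assoc, h2, h1]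

end symm2
section expand

variable {n : ℕ}

lemma FS_expand {R : Type*} [CommRing R] (lam : Fin n → ℕ) (x : Fin n → R) (y : ℤ → R) :
    FS lam x y = ∑ T ∈ Finset.univ.filter (fun T : cells lam → Fin n × Bool => IsBarred lam T),
      (∏ c ∈ Finset.univ.filter (fun c : cells lam => (T c).2 = true),
        y (ysub (T c).1 (c : Fin n × ℕ))) * ∏ k, x k ^ content1 lam T k := by
  have h1 : ∀ T : cells lam → Fin n, ∏ c : cells lam, (x (T c) + y (ysub (T c) (c : Fin n × ℕ))) =
      ∑ b : cells lam → Bool, ∏ c : cells lam,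
        (if b c = true then y (ysub (T c) (c : Fin n × ℕ)) else x (T c)) := by
    intro T
    have := Finset.prod_univ_sum (fun _ : cells lam => (Finset.univ : Finset Bool))
      (fun c b => if b = true then y (ysub (T c) (c : Fin n × ℕ)) else x (T c))
    rw [Fintype.piFinset_univ] at this
    rw [← this]
    refine Finset.prod_congr rfl fun c _ => ?_
    simp [add_comm]
  unfold FS
  rw [Finset.sum_congr rfl fun T _ => h1 T, ← Finset.sum_product']
  refine Finset.sum_bij' (fun p _ c => (p.1 c, p.2 c))
    (fun T _ => (fun c => (T c).1, fun c => (T c).2)) ?_ ?_ ?_ ?_ ?_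
  · intro p hp
    simp only [Finset.mem_product, Finset.mem_filter, Finset.mem_univ, true_and, and_true] at hp ⊢
    exact hp
  · intro T hT
    simp only [Finset.mem_product, Finset.mem_filter, Finset.mem_univ, true_and, and_true] at hT ⊢
    exact hT
  · intros; rfl
  · intros; rfl
  · rintro ⟨T, b⟩ _
    rw [Finset.prod_ite]
    congr 1
    rw [← Finset.prod_fiberwise (Finset.univ.filter fun c => ¬ b c = true) T]
    refine Finset.prod_congr rfl fun k _ => ?_
    rw [Finset.prod_congr rfl (g := fun _ => x k)
      (fun c hc => congrArg x (Finset.mem_filter.1 hc).2), Finset.prod_const]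
    congr 1
    unfold content1
    rw [Finset.filter_filter]
    congr 1
    ext c
    simp [and_comm]

lemma prod_expand {r : ℕ} (lam : Fin r → Fin n → ℕ)
    (x : Fin n → MvPolynomial (Fin n ⊕ Fin r × ℤ) ℤ) :
    ∏ i, FS (lam i) x (fun m => X (Sum.inr (i, m))) =
    ∑ T ∈ Finset.univ.filter
          (fun T : (i : Fin r) → cells (lam i) → Fin n × Bool => IsBarredSkew lam T),
        rename Sum.inr (cT lam T) * ∏ k, x k ^ contentT lam T k := by
  simp only [FS_expand]
  rw [Finset.prod_univ_sum]
  refine Finset.sum_congr ?_ fun T _ => ?_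
  · ext T
    rw [Fintype.mem_piFinset, Finset.mem_filter]
    simp only [Finset.mem_filter, Finset.mem_univ, true_and, IsBarredSkew]
  · rw [Finset.prod_mul_distrib, Finset.prod_comm]
    congr 1
    · simp [cT, cT1]
    · refine Finset.prod_congr rfl fun k _ => ?_
      rw [Finset.prod_pow_eq_pow_sum]; rfl

end expand

/-- Lemma 3.1: `a_ρ(x) · s_λ̄(x|y) = Σ_{T ∈ B_λ̄} c_T(y) a_{ρ+ω(T)}(x)`. -/
theorem alternant_times_factorial_schur (n r : ℕ) (hn : 1 ≤ n) (hr : 1 ≤ r)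
    (lam : Fin r → Fin n → ℕ) (hlam : ∀ i, IsPartition (lam i)) :
    avand n r (rhoPart n) * ∏ i, factSchur n r i (lam i)
      = ∑ T ∈ Finset.univ.filter
          (fun T : (i : Fin r) → cells (lam i) → Fin n × Bool => IsBarredSkew lam T),
        rename Sum.inr (cT lam T) * avand n r (fun k => rhoPart n k + contentT lam T k) := by
  have hFS : ∀ σ : Equiv.Perm (Fin n), ∏ i, factSchur n r i (lam i) =
      ∏ i, FS (lam i) ((fun k => (X (Sum.inl k) : MvPolynomial (Fin n ⊕ Fin r × ℤ) ℤ)) ∘ σ)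
        (fun m => X (Sum.inr (i, m))) := by
    intro σ
    refine Finset.prod_congr rfl fun i _ => ?_
    rw [FS_perm (hlam i)]
    rfl
  simp only [avand, Matrix.det_apply, Matrix.of_apply]
  rw [Finset.sum_mul]
  simp only [Finset.mul_sum]
  rw [Finset.sum_comm]
  refine Finset.sum_congr rfl fun σ _ => ?_
  rw [hFS σ, prod_expand, Finset.mul_sum]
  refine Finset.sum_congr rfl fun T _ => ?_
  simp only [Function.comp, pow_add, Finset.prod_mul_distrib, mul_smul_comm, smul_mul_assoc]
  congr 1
  ring
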